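/- The merge rule is eliminable in the presence of switch: for all LBV structures P, Q and R with R ∈ Merge(P,Q), there exists a rewriting path [P,Q] →* R that uses only the switch rewrite rule (rewriting C[(P',Q'),R'] to C(P',[Q',R'])), applied in arbitrary contexts and modulo the structural equivalence; in particular the merge rewrite rule g (rewriting [P,Q] to any R ∈ Merge(P,Q)) never needs to be used. -/

import Mathlib

/-!
The deep-inference system LBV (the `BV`-free core system of the calculus of
structures of Guglielmi).  Structures are built from the unit `◦`, atoms `a`
and negated atoms `ā` by par `[P,Q]` and copar `(P,Q)`, and are identified
modulo the congruence generated by associativity, commutativity and the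
unit laws `[P,◦]=P`, `(P,◦)=P`.  The rules `ai↓`, `s` (and the atomic cut
`ai↑`) apply inside an arbitrary one-hole context and modulo the
equivalence.
-/

namespace LBV

/-- Structures: the unit `◦`, atoms, negated atoms, par `[P,Q]` and
copar `(P,Q)`. -/
inductive St : Type where
  | unit : St
  | pos  : ℕ → St
  | neg  : ℕ → St
  | par  : St → St → St
  | cop  : St → St → St
deriving DecidableEq

/-- Negation: `¬◦ = ◦`, `¬[P,Q] = (¬P,¬Q)`, `¬(P,Q) = [¬P,¬Q]`, `¬¬P = P`. -/
def St.negS : St → St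
  | .unit => .unit
  | .pos a => .neg a
  | .neg a => .pos a
  | .par P Q => .cop P.negS Q.negS
  | .cop P Q => .par P.negS Q.negS

/-- Atoms are the propositional symbols and their negations. -/
def St.isAtom : St → Prop
  | .pos _ => True
  | .neg _ => True
  | _ => False

/-- Syntactic equivalence of structures: the smallest congruence generated
by associativity and commutativity of par and copar and the unit laws
`[P,◦]=P` and `(P,◦)=P`. -/
inductive Equiv : St → St → Prop where
  | refl (P : St) : Equiv P P
  | symm {P Q : St} : Equiv P Q → Equiv Q P
  | trans {P Q R : St} : Equiv P Q → Equiv Q R → Equiv P R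
  | parComm (P Q : St) : Equiv (.par P Q) (.par Q P)
  | copComm (P Q : St) : Equiv (.cop P Q) (.cop Q P)
  | parAssoc (P Q R : St) : Equiv (.par (.par P Q) R) (.par P (.par Q R))
  | copAssoc (P Q R : St) : Equiv (.cop (.cop P Q) R) (.cop P (.cop Q R))
  | parUnit (P : St) : Equiv (.par P .unit) P
  | copUnit (P : St) : Equiv (.cop P .unit) P
  | parCongr {P P' Q Q' : St} :
      Equiv P P' → Equiv Q Q' → Equiv (.par P Q) (.par P' Q')
  | copCongr {P P' Q Q' : St} :
      Equiv P P' → Equiv Q Q' → Equiv (.cop P Q) (.cop P' Q')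

/-- One-hole contexts. -/
inductive Ctx : Type where
  | hole : Ctx
  | parL : Ctx → St → Ctx
  | parR : St → Ctx → Ctx
  | copL : Ctx → St → Ctx
  | copR : St → Ctx → Ctx

/-- Plugging a structure into the hole of a context. -/
def Ctx.fill : Ctx → St → St
  | .hole, P => P
  | .parL C Q, P => .par (C.fill P) Q
  | .parR Q C, P => .par Q (C.fill P)
  | .copL C Q, P => .cop (C.fill P) Q
  | .copR Q C, P => .cop Q (C.fill P)

/-- Names of the rules: interaction `ai↓`, co-interaction (atomic cut)
`ai↑`, and switch `s`. -/
inductive Rule : Type where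
  | aiDown | aiUp | s
deriving DecidableEq

/-- The rules read at the root of a structure (premise on the left,
conclusion on the right). -/
inductive RootStep : Rule → St → St → Prop where
  | aiDown (A : St) (h : A.isAtom) : RootStep .aiDown .unit (.par A A.negS)
  | aiUp (A : St) (h : A.isAtom) : RootStep .aiUp (.cop A A.negS) .unit
  | s (P Q R : St) : RootStep .s (.cop P (.par Q R)) (.par (.cop P Q) R)

/-- One inference step using a rule from the set `Rs`, applied inside an
arbitrary context and modulo the equivalence. -/
def Step (Rs : Set Rule) (P Q : St) : Prop :=
  ∃ r ∈ Rs, ∃ (C : Ctx) (P' Q' : St),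
    RootStep r P' Q' ∧ Equiv P (C.fill P') ∧ Equiv (C.fill Q') Q

/-- Derivations over an arbitrary step relation: a finite sequence of rule
instances from the premise to the conclusion (modulo the equivalence). -/
inductive Deriv (Stp : St → St → Prop) : St → St → Prop where
  | eqv {P Q : St} : Equiv P Q → Deriv Stp P Q
  | step {P Q R : St} : Stp P Q → Deriv Stp Q R → Deriv Stp P R

/-- The rules of the system LBV. -/
def LBVRules : Set Rule := {.aiDown, .s}

/-- Derivations in LBV. -/
def DerivLBV (P Q : St) : Prop := Deriv (Step LBVRules) P Q

/-- A proof of `Q` in LBV is a derivation from the unit `◦` to `Q`. -/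
def ProofLBV (Q : St) : Prop := DerivLBV .unit Q

end LBV

namespace LBV

mutual
  /-- `MergeRel P Q R` means `R ∈ Merge(P,Q)`, where
  `Merge(P,Q) = {[P,Q], (P,Q)} ∪ M(P,Q) ∪ M(Q,P)`. -/
  inductive MergeRel : St → St → St → Prop where
    | par (P Q : St) : MergeRel P Q (.par P Q)
    | cop (P Q : St) : MergeRel P Q (.cop P Q)
    | left {P Q R : St} : MRel P Q R → MergeRel P Q R
    | right {P Q R : St} : MRel Q P R → MergeRel P Q R

  /-- `MRel P Q R` means `R ∈ M(P,Q)`, where `M(◦,Q) = M(a,Q) = ∅`,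
  `M([S,T],Q) = {[S,X] : X ∈ Merge(T,Q)} ∪ {[X,T] : X ∈ Merge(S,Q)}` and
  `M((S,T),Q) = {(S,X) : X ∈ Merge(T,Q)} ∪ {(X,T) : X ∈ Merge(S,Q)}`. -/
  inductive MRel : St → St → St → Prop where
    | parL {S T Q X : St} : MergeRel T Q X → MRel (.par S T) Q (.par S X)
    | parR {S T Q X : St} : MergeRel S Q X → MRel (.par S T) Q (.par X T)
    | copL {S T Q X : St} : MergeRel T Q X → MRel (.cop S T) Q (.cop S X)
    | copR {S T Q X : St} : MergeRel S Q X → MRel (.cop S T) Q (.cop X T)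
end

/-- The switch rule read bottom-up as a rewrite rule: it rewrites
`C[(P,Q),R]` to `C(P,[Q,R])`, in an arbitrary context and modulo the
structural equivalence. -/
def SwitchRw (A B : St) : Prop :=
  ∃ (C : Ctx) (P Q R : St),
    Equiv A (C.fill (.par (.cop P Q) R)) ∧ Equiv (C.fill (.cop P (.par Q R))) B

/-!
Mix, `[P,Q] → (P,Q)`, is the instance `[(P,◦),Q] → (P,[◦,Q])` of switch, so both base elements of
`Merge(P,Q)` are reachable from `[P,Q]`.  Each recursive clause replaces a direct substructure of
`[S,T]` or `(S,T)` by its merge with `Q`; associativity, respectively one switch, brings `Q` next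
to that substructure, and the path given by induction is then replayed in the remaining context.
-/

theorem Equiv.fill {A B : St} (h : Equiv A B) (C : Ctx) : Equiv (C.fill A) (C.fill B) := by
  induction C with
  | hole => exact h
  | parL C S ih => exact .parCongr ih (.refl S)
  | parR S C ih => exact .parCongr (.refl S) ih
  | copL C S ih => exact .copCongr ih (.refl S)
  | copR S C ih => exact .copCongr (.refl S) ih

theorem Equiv.unit_par (P : St) : Equiv (.par .unit P) P :=
  .trans (.parComm .unit P) (.parUnit P)

theorem Equiv.par_right_comm (P Q R : St) : Equiv (.par (.par P Q) R) (.par (.par P R) Q) :=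
  .trans (.parAssoc P Q R) (.trans (.parCongr (.refl P) (.parComm Q R)) (.symm (.parAssoc P R Q)))

theorem Deriv.lift {Stp Stp' : St → St → Prop} {A B : St} (f : St → St)
    (hequiv : ∀ {A B}, Equiv A B → Equiv (f A) (f B))
    (hstep : ∀ {A B}, Stp A B → Stp' (f A) (f B)) (h : Deriv Stp A B) :
    Deriv Stp' (f A) (f B) := by
  induction h with
  | eqv h => exact .eqv (hequiv h)
  | step h _ ih => exact .step (hstep h) ih

theorem Deriv.of_equiv {Stp : St → St → Prop} {A A' B : St}
    (hstep : ∀ {B}, Stp A' B → Stp A B) (e : Equiv A A') (h : Deriv Stp A' B) :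
    Deriv Stp A B := by
  cases h with
  | eqv h => exact .eqv (e.trans h)
  | step h d => exact .step (hstep h) d

namespace SwitchRw

theorem of_equiv {A A' B : St} (e : Equiv A A') (h : SwitchRw A' B) : SwitchRw A B := by
  obtain ⟨C, P, Q, R, hA, hB⟩ := h
  exact ⟨C, P, Q, R, e.trans hA, hB⟩

theorem fill {A B : St} (h : SwitchRw A B) (C : Ctx) : SwitchRw (C.fill A) (C.fill B) := by
  induction C with
  | hole => exact h
  | parL C S ih =>
    obtain ⟨D, P, Q, R, hA, hB⟩ := ih
    exact ⟨.parL D S, P, Q, R, .parCongr hA (.refl S), .parCongr hB (.refl S)⟩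
  | parR S C ih =>
    obtain ⟨D, P, Q, R, hA, hB⟩ := ih
    exact ⟨.parR S D, P, Q, R, .parCongr (.refl S) hA, .parCongr (.refl S) hB⟩
  | copL C S ih =>
    obtain ⟨D, P, Q, R, hA, hB⟩ := ih
    exact ⟨.copL D S, P, Q, R, .copCongr hA (.refl S), .copCongr hB (.refl S)⟩
  | copR S C ih =>
    obtain ⟨D, P, Q, R, hA, hB⟩ := ih
    exact ⟨.copR S D, P, Q, R, .copCongr (.refl S) hA, .copCongr (.refl S) hB⟩

theorem switch_right (P Q R : St) : SwitchRw (.par (.cop P Q) R) (.cop P (.par Q R)) :=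
  ⟨.hole, P, Q, R, .refl _, .refl _⟩

theorem switch_left (P Q R : St) : SwitchRw (.par (.cop P Q) R) (.cop (.par P R) Q) :=
  ⟨.hole, Q, P, R, .parCongr (.copComm P Q) (.refl R), .copComm Q (.par P R)⟩

theorem mix (P Q : St) : SwitchRw (.par P Q) (.cop P Q) :=
  ⟨.hole, P, .unit, Q, .parCongr (.symm (.copUnit P)) (.refl Q), .copCongr (.refl P) (.unit_par Q)⟩

theorem deriv_fill {A B : St} (h : Deriv SwitchRw A B) (C : Ctx) :
    Deriv SwitchRw (C.fill A) (C.fill B) :=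
  h.lift C.fill (·.fill C) (·.fill C)

theorem deriv_of_equiv {A A' B : St} (e : Equiv A A') (h : Deriv SwitchRw A' B) :
    Deriv SwitchRw A B :=
  h.of_equiv (of_equiv e) e

end SwitchRw

/-- the merge rule is eliminable in the presence of switch.
For all structures `P`, `Q`, `R` with `R ∈ Merge(P,Q)` there is a rewriting
path `[P,Q] →* R` using only the switch rewrite rule (applied in arbitrary
contexts and modulo the structural equivalence); in particular the merge
rewrite rule `g` never needs to be used. -/
theorem merge_elimination (P Q R : St) (h : MergeRel P Q R) :
    Deriv SwitchRw (.par P Q) R := by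
  open SwitchRw in
  induction h using MergeRel.rec
    (motive_2 := fun P Q R _ => Deriv SwitchRw (.par P Q) R) with
  | par P Q => exact .eqv (.refl _)
  | cop P Q => exact .step (mix P Q) (.eqv (.refl _))
  | left _ ih => exact ih
  | @right P Q R _ ih => exact deriv_of_equiv (.parComm P Q) ih
  | @parL S T Q X _ ih => exact deriv_of_equiv (.parAssoc S T Q) (deriv_fill ih (.parR S .hole))
  | @parR S T Q X _ ih =>
    exact deriv_of_equiv (.par_right_comm S T Q) (deriv_fill ih (.parL .hole T))
  | @copL S T Q X _ ih => exact .step (switch_right S T Q) (deriv_fill ih (.copR S .hole))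
  | @copR S T Q X _ ih => exact .step (switch_left S T Q) (deriv_fill ih (.copL .hole T))

end LBV
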